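/- Let u ∈ 𝒰_Ω, let w be the length of the orthogonal projection of Ω onto the y-axis, and let M = max_{(x,y)∈Ω} u(x,y). Then w·M ≤ ‖u_x‖₁ ≤ 2·w·M. -/

import Mathlib

open Set MeasureTheory
open scoped ENNReal

/-- Partial derivative of `u` in the `x` direction (junk value where `u` is not
differentiable). -/
noncomputable def ux (u : ℝ × ℝ → ℝ) (z : ℝ × ℝ) : ℝ := fderiv ℝ u z (1, 0)

/-- Partial derivative of `u` in the `y` direction. -/
noncomputable def uy (u : ℝ × ℝ → ℝ) (z : ℝ × ℝ) : ℝ := fderiv ℝ u z (0, 1)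

/-- Directional derivative of `u` in the direction `h`. -/
noncomputable def uh (h : ℝ × ℝ) (u : ℝ × ℝ → ℝ) (z : ℝ × ℝ) : ℝ := fderiv ℝ u z h

/-- The class `𝒰_Ω`: continuous concave functions on `Ω` vanishing on the boundary,
with uniformly bounded gradient over all interior points where it exists. -/
def MemU (Ω : Set (ℝ × ℝ)) (u : ℝ × ℝ → ℝ) : Prop :=
  ContinuousOn u Ω ∧ ConcaveOn ℝ Ω u ∧ (∀ z ∈ frontier Ω, u z = 0) ∧
    ∃ C : ℝ, ∀ z ∈ interior Ω, ∀ g : (ℝ × ℝ) →L[ℝ] ℝ, HasFDerivAt u g z → ‖g‖ ≤ C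

/-- The `L¹` norm of `f` over `Ω`. -/
noncomputable def L1N (Ω : Set (ℝ × ℝ)) (f : ℝ × ℝ → ℝ) : ℝ := ∫ z in Ω, |f z|

/-- The `L^p` norm of `f` over `Ω`, `p ∈ [1, ∞)`. -/
noncomputable def LpN (Ω : Set (ℝ × ℝ)) (p : ℝ) (f : ℝ × ℝ → ℝ) : ℝ :=
  (∫ z in Ω, |f z| ^ p) ^ (1 / p)

/-- The `L^∞` norm (essential supremum) of `f` over `Ω`. -/
noncomputable def LinfN (Ω : Set (ℝ × ℝ)) (f : ℝ × ℝ → ℝ) : ℝ≥0∞ :=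
  essSup (fun z => ENNReal.ofReal |f z|) (volume.restrict Ω)

/-- The width of `Ω` parallel to the (Euclidean unit) vector `h`: the distance between the
two lines of support of `Ω` parallel to `h`, i.e. the oscillation over `Ω` of the linear
functional given by the unit normal `(-h.2, h.1)` to `h`. -/
noncomputable def widthPar (Ω : Set (ℝ × ℝ)) (h : ℝ × ℝ) : ℝ :=
  sSup ((fun z : ℝ × ℝ => -h.2 * z.1 + h.1 * z.2) '' Ω) -
    sInf ((fun z : ℝ × ℝ => -h.2 * z.1 + h.1 * z.2) '' Ω)

theorem MonotoneOn.integral_abs_deriv_eq_sub {f g : ℝ → ℝ} {a b : ℝ} (hab : a ≤ b)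
    (hcont : ContinuousOn f (Icc a b)) (hmono : MonotoneOn f (Icc a b))
    (hright : ∀ x ∈ Ioo a b, DifferentiableWithinAt ℝ f (Ioi x) x)
    (hg : ∀ᵐ x, x ∈ Ioo a b → HasDerivAt f (g x) x) :
    IntervalIntegrable (fun x => |g x|) volume a b ∧ ∫ x in a..b, |g x| = f b - f a := by
  have hderiv : ∀ x ∈ Ioo a b, HasDerivWithinAt f (derivWithin f (Ioi x) x) (Ioi x) x :=
    fun x hx => (hright x hx).hasDerivWithinAt
  have hnonneg : ∀ x ∈ Ioo a b, 0 ≤ derivWithin f (Ioi x) x := by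
    intro x hx
    have h := (hasDerivWithinAt_iff_tendsto_slope' self_notMem_Ioi).1 (hderiv x hx)
    refine ge_of_tendsto h ?_
    filter_upwards [Ioo_mem_nhdsGT hx.2] with y hy
    rw [slope_def_field]
    exact div_nonneg (sub_nonneg.2 (hmono (Ioo_subset_Icc_self hx)
      ⟨(hx.1.trans hy.1).le, hy.2.le⟩ hy.1.le)) (sub_nonneg.2 hy.1.le)
  have hint : IntervalIntegrable (fun x => derivWithin f (Ioi x) x) volume a b :=
    (intervalIntegrable_iff_integrableOn_Ioc_of_le hab).2
      (intervalIntegral.integrableOn_deriv_right_of_nonneg hcont hderiv hnonneg)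
  have hae : ∀ᵐ x, x ∈ uIoc a b → derivWithin f (Ioi x) x = |g x| := by
    have hb : ∀ᵐ x : ℝ, x ≠ b := by simp [ae_iff]
    filter_upwards [hg, hb] with x hx hxb hxab
    rw [uIoc_of_le hab] at hxab
    have hx' : x ∈ Ioo a b := ⟨hxab.1, lt_of_le_of_ne hxab.2 hxb⟩
    have h := (hx hx').hasDerivWithinAt.derivWithin (uniqueDiffWithinAt_Ioi x)
    rw [← h, abs_of_nonneg (hnonneg x hx')]
  refine ⟨hint.congr_ae ((ae_restrict_iff' measurableSet_uIoc).2 hae), ?_⟩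
  rw [← intervalIntegral.integral_congr_ae hae,
    intervalIntegral.integral_eq_sub_of_hasDeriv_right_of_le hab hcont hderiv hint]

theorem ConcaveOn.exists_isMaxOn_integral_abs_deriv_eq {f g : ℝ → ℝ} {a b : ℝ} (hab : a ≤ b)
    (hf : ConcaveOn ℝ (Icc a b) f) (hcont : ContinuousOn f (Icc a b))
    (ha : f a = 0) (hb : f b = 0)
    (hg : ∀ᵐ x, x ∈ Ioo a b → HasDerivAt f (g x) x) :
    ∃ x₀ ∈ Icc a b, IsMaxOn f (Icc a b) x₀ ∧ ∫ x in Icc a b, |g x| = 2 * f x₀ := by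
  obtain ⟨x₀, hx₀, hmax⟩ := isCompact_Icc.exists_isMaxOn (nonempty_Icc.2 hab) hcont
  refine ⟨x₀, hx₀, hmax, ?_⟩
  have hright : ∀ x ∈ Ioo a b, DifferentiableWithinAt ℝ (-f) (Ioi x) x := fun x hx =>
    (hf.neg.hasDerivWithinAt_rightDeriv_of_mem_interior
      (by rwa [interior_Icc])).differentiableWithinAt
  have hleftsub : Icc a x₀ ⊆ Icc a b := Icc_subset_Icc_right hx₀.2
  have hrightsub : Icc x₀ b ⊆ Icc a b := Icc_subset_Icc_left hx₀.1
  have hmono : MonotoneOn f (Icc a x₀) := by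
    intro x hx y hy hxy
    have h := hf.min_le_of_mem_Icc (hleftsub hx) hx₀ ⟨hxy, hy.2⟩
    rwa [min_eq_left (hmax (hleftsub hx))] at h
  have hanti : MonotoneOn (-f) (Icc x₀ b) := by
    intro x hx y hy hxy
    have h := hf.min_le_of_mem_Icc hx₀ (hrightsub hy) ⟨hx.1, hxy⟩
    rw [min_eq_right (hmax (hrightsub hy))] at h
    exact neg_le_neg h
  obtain ⟨hi₁, he₁⟩ := hmono.integral_abs_deriv_eq_sub (g := g) hx₀.1 (hcont.mono hleftsub)
    (fun x hx => by simpa using (hright x ⟨hx.1, hx.2.trans_le hx₀.2⟩).neg)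
    (hg.mono fun x h hx => h ⟨hx.1, hx.2.trans_le hx₀.2⟩)
  obtain ⟨hi₂, he₂⟩ := hanti.integral_abs_deriv_eq_sub (g := -g) hx₀.2 (hcont.mono hrightsub).neg
    (fun x hx => hright x ⟨hx₀.1.trans_lt hx.1, hx.2⟩)
    (hg.mono fun x h hx => (h ⟨hx₀.1.trans_lt hx.1, hx.2⟩).neg)
  simp only [Pi.neg_apply, abs_neg] at hi₂ he₂
  rw [integral_Icc_eq_integral_Ioc, ← intervalIntegral.integral_of_le hab,
    ← intervalIntegral.integral_add_adjacent_intervals hi₁ hi₂, he₁, he₂, ha, hb]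
  ring

theorem ConcaveOn.ae_differentiableAt {E : Type*} [NormedAddCommGroup E] [NormedSpace ℝ E]
    [FiniteDimensional ℝ E] [MeasurableSpace E] [BorelSpace E] (μ : Measure E)
    [μ.IsAddHaarMeasure] {s : Set E} {f : E → ℝ} (hf : ConcaveOn ℝ s f) :
    ∀ᵐ x ∂μ, x ∈ s → DifferentiableAt ℝ f x := by
  have hinterior : μ {x ∈ interior s | ¬ DifferentiableAt ℝ f x} = 0 := by
    refine measure_null_of_locally_null _ fun x hx => ?_
    obtain ⟨K, t, ht, hK⟩ := hf.locallyLipschitzOn_interior hx.1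
    rw [isOpen_interior.nhdsWithin_eq hx.1] at ht
    refine ⟨{y ∈ interior t | ¬ DifferentiableAt ℝ f y}, ?_, ?_⟩
    · filter_upwards [mem_nhdsWithin_of_mem_nhds (interior_mem_nhds.2 ht), self_mem_nhdsWithin]
        with y hy hy' using ⟨hy, hy'.2⟩
    · refine measure_mono_null ?_
        (ae_iff.1 ((hK.mono interior_subset).ae_differentiableWithinAt_of_mem (μ := μ)))
      rintro y ⟨hy, hyd⟩ h
      exact hyd ((h hy).differentiableAt (isOpen_interior.mem_nhds hy))
  refine ae_iff.2 (measure_mono_null ?_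
    (measure_union_null hinterior (hf.1.addHaar_frontier μ)))
  intro x hx
  obtain ⟨hxs, hxd⟩ := Classical.not_imp.1 hx
  by_cases h : x ∈ interior s
  · exact Or.inl ⟨h, hxd⟩
  · exact Or.inr ⟨subset_closure hxs, h⟩

theorem Convex.exists_horizontal_slice_eq_Icc {Ω : Set (ℝ × ℝ)} (hΩ : IsCompact Ω)
    (hconv : Convex ℝ Ω) {x y : ℝ} (hxy : (x, y) ∈ Ω) :
    ∃ a b : ℝ, a ≤ b ∧ (∀ t, (t, y) ∈ Ω ↔ t ∈ Icc a b) ∧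
      (a, y) ∈ frontier Ω ∧ (b, y) ∈ frontier Ω := by
  have hcontinuous : Continuous fun t : ℝ => (t, y) := by fun_prop
  have hslice_convex : Convex ℝ ((fun t : ℝ => (t, y)) ⁻¹' Ω) := by
    intro s hs t ht α β hα hβ hαβ
    have h := hconv hs ht hα hβ hαβ
    simpa [← add_mul, hαβ] using h
  have hslice_compact : IsCompact ((fun t : ℝ => (t, y)) ⁻¹' Ω) :=
    (hΩ.image continuous_fst).of_isClosed_subset (hΩ.isClosed.preimage hcontinuous)
      fun t ht => ⟨(t, y), ht, rfl⟩
  have heq := eq_Icc_of_connected_compact ⟨⟨x, hxy⟩, hslice_convex.isPreconnected⟩ hslice_compact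
  set a := sInf ((fun t : ℝ => (t, y)) ⁻¹' Ω)
  set b := sSup ((fun t : ℝ => (t, y)) ⁻¹' Ω)
  have hmem : ∀ t, (t, y) ∈ Ω ↔ t ∈ Icc a b := fun t => by rw [← heq]; rfl
  have hx := (hmem x).1 hxy
  have hab : a ≤ b := hx.1.trans hx.2
  have hnhds : ∀ t, (t, y) ∈ interior Ω → t ∈ Ioo a b := by
    intro t ht
    have h := hcontinuous.continuousAt.preimage_mem_nhds (mem_interior_iff_mem_nhds.1 ht)
    rw [heq] at h
    exact Icc_mem_nhds_iff.1 h
  refine ⟨a, b, hab, hmem, ⟨subset_closure ((hmem a).2 ⟨le_rfl, hab⟩), fun h => ?_⟩,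
    ⟨subset_closure ((hmem b).2 ⟨hab, le_rfl⟩), fun h => ?_⟩⟩
  · exact lt_irrefl _ (hnhds _ h).1
  · exact lt_irrefl _ (hnhds _ h).2

section

variable {Ω : Set (ℝ × ℝ)} {u : ℝ × ℝ → ℝ}

theorem MemU.exists_slice_data (hΩ : IsCompact Ω) (hconv : Convex ℝ Ω) (hu : MemU Ω u)
    {x y : ℝ} (hxy : (x, y) ∈ Ω) :
    ∃ a b : ℝ, a ≤ b ∧ (∀ t, (t, y) ∈ Ω ↔ t ∈ Icc a b) ∧
      u (a, y) = 0 ∧ u (b, y) = 0 ∧ ContinuousOn (fun t => u (t, y)) (Icc a b) ∧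
      ConcaveOn ℝ (Icc a b) fun t => u (t, y) := by
  obtain ⟨a, b, hab, hmem, ha, hb⟩ := hconv.exists_horizontal_slice_eq_Icc hΩ hxy
  refine ⟨a, b, hab, hmem, hu.2.2.1 _ ha, hu.2.2.1 _ hb,
    hu.1.comp (by fun_prop) fun t ht => (hmem t).2 ht, convex_Icc a b, ?_⟩
  intro s hs t ht α β hα hβ hαβ
  have h := hu.2.1.2 ((hmem s).2 hs) ((hmem t).2 ht) hα hβ hαβ
  simpa [← add_mul, hαβ] using h

theorem MemU.nonneg (hΩ : IsCompact Ω) (hconv : Convex ℝ Ω) (hu : MemU Ω u) {z : ℝ × ℝ}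
    (hz : z ∈ Ω) : 0 ≤ u z := by
  obtain ⟨x, y⟩ := z
  obtain ⟨a, b, hab, hmem, ha, hb, -, hconc⟩ := hu.exists_slice_data hΩ hconv hz
  have h := hconc.min_le_of_mem_Icc (left_mem_Icc.2 hab) (right_mem_Icc.2 hab) ((hmem x).1 hz)
  simpa [ha, hb] using h

/-- The integral of `|u_x|` over a horizontal slice is twice the maximum of `u` there. -/
theorem MemU.exists_isMaxOn_slice_integral_eq (hΩ : IsCompact Ω) (hconv : Convex ℝ Ω)
    (hu : MemU Ω u) {x y : ℝ} (hxy : (x, y) ∈ Ω)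
    (hdiff : ∀ᵐ t, (t, y) ∈ Ω → DifferentiableAt ℝ u (t, y)) :
    ∃ x₀, (x₀, y) ∈ Ω ∧ (∀ t, (t, y) ∈ Ω → u (t, y) ≤ u (x₀, y)) ∧
      ∫ t, Ω.indicator (fun z => |ux u z|) (t, y) = 2 * u (x₀, y) := by
  obtain ⟨a, b, hab, hmem, ha, hb, hcont, hconc⟩ := hu.exists_slice_data hΩ hconv hxy
  obtain ⟨x₀, hx₀, hmax, hint⟩ := hconc.exists_isMaxOn_integral_abs_deriv_eq
    (g := fun t => ux u (t, y)) hab hcont ha hb <| by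
      filter_upwards [hdiff] with t ht htab
      have h := (ht ((hmem t).2 (Ioo_subset_Icc_self htab))).hasFDerivAt
      exact h.comp_hasDerivAt t ((hasDerivAt_id t).prodMk (hasDerivAt_const t y))
  refine ⟨x₀, (hmem x₀).2 hx₀, fun t ht => hmax ((hmem t).1 ht), ?_⟩
  rw [← hint, ← integral_indicator measurableSet_Icc]
  refine integral_congr_ae (Filter.Eventually.of_forall fun t => ?_)
  simp only [indicator, hmem]

theorem MemU.integrableOn_abs_ux (hΩ : IsCompact Ω) (hconv : Convex ℝ Ω) (hu : MemU Ω u) :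
    IntegrableOn (fun z => |ux u z|) Ω := by
  obtain ⟨C, hC⟩ := hu.2.2.2
  have hmeas : Measurable fun z => |ux u z| :=
    (measurable_fderiv_apply_const ℝ u ((1, 0) : ℝ × ℝ)).abs
  refine Measure.integrableOn_of_bounded (M := C) hΩ.measure_lt_top.ne
    hmeas.aestronglyMeasurable ?_
  have hfrontier : ∀ᵐ z, z ∉ frontier Ω :=
    measure_eq_zero_iff_ae_notMem.1 (hconv.addHaar_frontier _)
  rw [ae_restrict_iff' hΩ.measurableSet]
  filter_upwards [hu.2.1.ae_differentiableAt volume, hfrontier] with z hz hzf hzΩ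
  have hzint : z ∈ interior Ω := by
    by_contra h
    exact hzf ⟨subset_closure hzΩ, h⟩
  have h := (fderiv ℝ u z).le_of_opNorm_le (hC z hzint _ (hz hzΩ).hasFDerivAt) (1, 0)
  simpa [ux, Prod.norm_def] using h

theorem integral_ramp (A p q : ℝ) : ∫ y in p..q, A * ((y - p) / (q - p)) = A * (q - p) / 2 := by
  rcases eq_or_ne q p with rfl | h
  · simp
  have h' := sub_ne_zero.2 h
  rw [intervalIntegral.integral_const_mul, intervalIntegral.integral_div,
    intervalIntegral.integral_comp_sub_right (fun y => y), integral_id]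
  field_simp
  ring

/-- Concavity along a segment of `Ω` bounds `u` from below on the horizontal slices it meets. -/
theorem MemU.exists_slice_ge (hΩ : IsCompact Ω) (hconv : Convex ℝ Ω) (hu : MemU Ω u)
    {p q : ℝ × ℝ} (hp : p ∈ Ω) (hq : q ∈ Ω) {y : ℝ} (hy : y ∈ uIcc p.2 q.2) :
    ∃ x, (x, y) ∈ Ω ∧ u q * ((y - p.2) / (q.2 - p.2)) ≤ u (x, y) := by
  rw [← segment_eq_uIcc] at hy
  obtain ⟨α, β, hα, hβ, hαβ, hy⟩ := hy
  have hmem := hconv hp hq hα hβ hαβ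
  have hle := hu.2.1.2 hp hq hα hβ hαβ
  have heq : α • p + β • q = (α * p.1 + β * q.1, y) := by
    ext <;> simp [← hy]
  rw [heq] at hmem hle
  refine ⟨_, hmem, le_trans ?_ hle⟩
  have hp0 := hu.nonneg hΩ hconv hp
  have hq0 := hu.nonneg hΩ hconv hq
  have hβle : (y - p.2) / (q.2 - p.2) ≤ β := by
    have hyβ : y - p.2 = β * (q.2 - p.2) := by
      rw [← hy, eq_sub_of_add_eq hαβ, smul_eq_mul, smul_eq_mul]
      ring
    rw [hyβ, mul_div_assoc]
    exact mul_le_of_le_one_right hβ (div_self_le_one _)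
  simp only [smul_eq_mul]
  nlinarith [mul_le_mul_of_nonneg_left hβle hq0, mul_nonneg hα hp0]

end

/-- Theorem 2: `w·M ≤ ‖u_x‖₁ ≤ 2·w·M`, where `w` is the length of the
projection of `Ω` to the `y`-axis and `M = max_Ω u`. -/
theorem stmt_2 (Ω : Set (ℝ × ℝ)) (hΩc : IsCompact Ω) (hΩconv : Convex ℝ Ω)
    (hΩint : (interior Ω).Nonempty)
    (u : ℝ × ℝ → ℝ) (hu : MemU Ω u)
    (c d : ℝ) (hproj : (fun z : ℝ × ℝ => z.2) '' Ω = Icc c d)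
    (M : ℝ) (hM : IsGreatest (u '' Ω) M) :
    (d - c) * M ≤ L1N Ω (ux u) ∧ L1N Ω (ux u) ≤ 2 * ((d - c) * M) := by
  obtain ⟨⟨q, hqΩ, rfl⟩, hmax⟩ := hM
  have hle : ∀ z ∈ Ω, u z ≤ u q := fun z hz => hmax ⟨z, hz, rfl⟩
  have hcq : q.2 ∈ Icc c d := hproj ▸ ⟨q, hqΩ, rfl⟩
  have hcd : c ≤ d := hcq.1.trans hcq.2
  obtain ⟨bot, hbotΩ, rfl⟩ : c ∈ (fun z : ℝ × ℝ => z.2) '' Ω := hproj ▸ left_mem_Icc.2 hcd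
  obtain ⟨top, htopΩ, rfl⟩ : d ∈ (fun z : ℝ × ℝ => z.2) '' Ω := hproj ▸ right_mem_Icc.2 hcd
  dsimp only at *
  set F : ℝ → ℝ := fun y => ∫ x, Ω.indicator (fun z => |ux u z|) (x, y) with hF
  have hint : Integrable (Ω.indicator fun z => |ux u z|)
      ((volume : Measure ℝ).prod (volume : Measure ℝ)) :=
    (integrable_indicator_iff hΩc.measurableSet).2 (hu.integrableOn_abs_ux hΩc hΩconv)
  have hFint : Integrable F := hint.integral_prod_right
  have hFzero : ∀ y ∉ Icc bot.2 top.2, F y = 0 := by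
    intro y hy
    have h : ∀ x, (x, y) ∉ Ω := fun x hx => hy (hproj ▸ ⟨(x, y), hx, rfl⟩)
    simp [hF, h]
  have hL1 : L1N Ω (ux u) = ∫ y in bot.2..top.2, F y := by
    rw [L1N, ← integral_indicator hΩc.measurableSet, Measure.volume_eq_prod,
      integral_prod_symm _ hint, intervalIntegral.integral_of_le hcd,
      ← integral_Icc_eq_integral_Ioc, setIntegral_eq_integral_of_forall_compl_eq_zero hFzero]
  have hdiff : ∀ᵐ y : ℝ, ∀ᵐ x : ℝ, (x, y) ∈ Ω → DifferentiableAt ℝ u (x, y) := by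
    have h := hu.2.1.ae_differentiableAt volume
    rw [Measure.volume_eq_prod] at h
    exact Measure.ae_ae_of_ae_prod (Measure.measurePreserving_swap.quasiMeasurePreserving.ae h)
  have hlower : ∀ᵐ y : ℝ, ∀ x, (x, y) ∈ Ω → 2 * u (x, y) ≤ F y := by
    filter_upwards [hdiff] with y hy x hx
    obtain ⟨x₀, -, hx₀, h⟩ := hu.exists_isMaxOn_slice_integral_eq hΩc hΩconv hx hy
    have := hx₀ x hx
    linarith
  have hupper : ∀ᵐ y : ℝ, y ∈ Icc bot.2 top.2 → F y ≤ 2 * u q := by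
    filter_upwards [hdiff] with y hy hymem
    obtain ⟨⟨x, y⟩, hx, rfl⟩ : y ∈ (fun z : ℝ × ℝ => z.2) '' Ω := hproj ▸ hymem
    obtain ⟨x₀, hx₀, -, h⟩ := hu.exists_isMaxOn_slice_integral_eq hΩc hΩconv hx hy
    have := hle _ hx₀
    linarith
  have hramp : ∀ p ∈ Ω, ∀ᵐ y : ℝ, y ∈ uIcc p.2 q.2 →
      2 * u q * ((y - p.2) / (q.2 - p.2)) ≤ F y := by
    intro p hp
    filter_upwards [hlower] with y hy hymem
    obtain ⟨x, hx, h⟩ := hu.exists_slice_ge hΩc hΩconv hp hqΩ hymem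
    have := hy x hx
    linarith
  have hrampint : ∀ p : ℝ × ℝ, ∀ r s : ℝ, IntervalIntegrable
      (fun y => 2 * u q * ((y - p.2) / (q.2 - p.2))) volume r s := fun p r s =>
    Continuous.intervalIntegrable (by fun_prop) r s
  rw [hL1]
  constructor
  · have h₁ : 2 * u q * (q.2 - bot.2) / 2 ≤ ∫ y in bot.2..q.2, F y := by
      rw [← integral_ramp]
      refine intervalIntegral.integral_mono_ae_restrict hcq.1 (hrampint _ _ _)
        hFint.intervalIntegrable ((ae_restrict_iff' measurableSet_Icc).2 ?_)
      simpa only [uIcc_of_le hcq.1] using hramp bot hbotΩ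
    have h₂ : -(2 * u q * (q.2 - top.2) / 2) ≤ ∫ y in q.2..top.2, F y := by
      rw [← integral_ramp, ← intervalIntegral.integral_symm]
      refine intervalIntegral.integral_mono_ae_restrict hcq.2 (hrampint _ _ _)
        hFint.intervalIntegrable ((ae_restrict_iff' measurableSet_Icc).2 ?_)
      simpa only [uIcc_of_ge hcq.2] using hramp top htopΩ
    rw [← intervalIntegral.integral_add_adjacent_intervals (b := q.2) hFint.intervalIntegrable
      hFint.intervalIntegrable]
    linarith
  · calc ∫ y in bot.2..top.2, F y ≤ ∫ _ in bot.2..top.2, 2 * u q :=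
          intervalIntegral.integral_mono_ae_restrict hcd hFint.intervalIntegrable
            intervalIntegrable_const ((ae_restrict_iff' measurableSet_Icc).2 hupper)
      _ = 2 * ((top.2 - bot.2) * u q) := by
          rw [intervalIntegral.integral_const, smul_eq_mul]
          ring
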